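/- A regular language L ⊆ Σ* over an ordered alphabet (Σ,≺) is Wheeler with respect to (Σ,≺) if and only if every co-lexicographically monotone sequence in Pref(L) is eventually constant modulo ≡_L; that is, for every sequence (α_i)_{i≥0} of words of Pref(L) with α₁ ⪯ α₂ ⪯ … ⪯ α_i ⪯ … or α₁ ⪰ α₂ ⪰ … ⪰ α_i ⪰ …, there exists n such that α_h ≡_L α_k for all h,k ≥ n. -/

import Mathlib

/-!
Common framework: words over an ordered alphabet, co-lexicographic order,
(partial) DFAs and NFAs, Wheeler automata and Wheeler languages,
following "Ordering regular languages: a danger zone".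
-/

namespace WheelerPaper

/-- Strict co-lexicographic order on words: compare the reverses lexicographically. -/
def Colex {A : Type} [LinearOrder A] (x y : List A) : Prop :=
  List.Lex (· < ·) x.reverse y.reverse

/-- Non-strict co-lexicographic order. -/
def ColexLE {A : Type} [LinearOrder A] (x y : List A) : Prop :=
  Colex x y ∨ x = y

/-- Right context `α⁻¹L` of a word `α` with respect to a language `L`. -/
def rc {A : Type} (L : Set (List A)) (α : List A) : Set (List A) :=
  {γ | α ++ γ ∈ L}

/-- `Pref L`: the set of prefixes of words of `L`. -/
def Pref {A : Type} (L : Set (List A)) : Set (List A) :=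
  {α | ∃ β, α ++ β ∈ L}

/-- `wpow γ i` is `γ^i`, the `i`-fold concatenation of the word `γ`. -/
def wpow {A : Type} (γ : List A) : ℕ → List A
  | 0 => []
  | n + 1 => γ ++ wpow γ n

/-- A DFA with a possibly partial transition function. -/
structure PDFA (A : Type) (Q : Type) where
  init : Q
  trans : Q → A → Option Q
  accept : Q → Prop

/-- Extended (partial) transition function of a `PDFA`. -/
def PDFA.evalFrom {A Q : Type} (M : PDFA A Q) : Q → List A → Option Q
  | q, [] => some q
  | q, a :: w => (M.trans q a).bind fun q' => PDFA.evalFrom M q' w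

/-- The language accepted by a `PDFA`. -/
def PDFA.accepts {A Q : Type} (M : PDFA A Q) : Set (List A) :=
  {w | ∃ q, M.evalFrom M.init w = some q ∧ M.accept q}

/-- A `PDFA` is trim if every state is reachable from the initial state and
every state can reach some accepting state. -/
def PDFA.Trim {A Q : Type} (M : PDFA A Q) : Prop :=
  (∀ q : Q, ∃ α, M.evalFrom M.init α = some q) ∧
  (∀ q : Q, ∃ α q', M.evalFrom q α = some q' ∧ M.accept q')

/-- `r` is a Wheeler order for the DFA `M`: a strict total order on states whose
minimum is the initial state, the initial state has no incoming transitions, and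
the two Wheeler conditions hold. -/
def IsWheelerOrder {A Q : Type} [LinearOrder A] (M : PDFA A Q) (r : Q → Q → Prop) : Prop :=
  IsStrictTotalOrder Q r ∧
  (∀ q : Q, q ≠ M.init → r M.init q) ∧
  (∀ (q : Q) (a : A), M.trans q a ≠ some M.init) ∧
  (∀ (u₁ : Q) (a₁ : A) (v₁ : Q) (u₂ : Q) (a₂ : A) (v₂ : Q),
     M.trans u₁ a₁ = some v₁ → M.trans u₂ a₂ = some v₂ →
     (a₁ < a₂ → r v₁ v₂) ∧ (a₁ = a₂ → r u₁ u₂ → (r v₁ v₂ ∨ v₁ = v₂)))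

/-- A language is Wheeler (w.r.t. the given order on the alphabet) if it is
recognized by some Wheeler DFA. -/
def IsWheelerLang {A : Type} [LinearOrder A] (L : Set (List A)) : Prop :=
  ∃ (n : ℕ) (M : PDFA A (Fin n)) (r : Fin n → Fin n → Prop),
    IsWheelerOrder M r ∧ M.accepts = L

/-- A language is regular if it is recognized by some finite-state (partial) DFA. -/
def IsRegular {A : Type} (L : Set (List A)) : Prop :=
  ∃ (k : ℕ) (M : PDFA A (Fin k)), M.accepts = L

/-- The input-consistent convex refinement `≡^c_L` of the Myhill–Nerode
equivalence: same right context, same last character (or both empty), and every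
word of `Pref L` co-lexicographically between the two words has the same right
context. -/
def EquivC {A : Type} [LinearOrder A] (L : Set (List A)) (α β : List A) : Prop :=
  rc L α = rc L β ∧ α.getLast? = β.getLast? ∧
  ∀ γ ∈ Pref L,
    ((ColexLE α γ ∧ ColexLE γ β) ∨ (ColexLE β γ ∧ ColexLE γ α)) →
    rc L γ = rc L α

/-- An NFA with a single initial state. -/
structure NFA' (A : Type) (Q : Type) where
  init : Q
  trans : Q → A → Set Q
  accept : Q → Prop

/-- One step of an `NFA'` on a set of states. -/
def NFA'.stepSet {A Q : Type} (M : NFA' A Q) (S : Set Q) (a : A) : Set Q :=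
  {q | ∃ p ∈ S, q ∈ M.trans p a}

/-- Extended transition function of an `NFA'` on sets of states. -/
def NFA'.evalFrom {A Q : Type} (M : NFA' A Q) : Set Q → List A → Set Q
  | S, [] => S
  | S, a :: w => NFA'.evalFrom M (M.stepSet S a) w

/-- The language accepted by an `NFA'`. -/
def NFA'.accepts {A Q : Type} (M : NFA' A Q) : Set (List A) :=
  {w | ∃ q ∈ M.evalFrom {M.init} w, M.accept q}

/-- An `NFA'` is trim if every state is reachable from the initial state and
every state can reach some accepting state. -/
def NFA'.Trim {A Q : Type} (M : NFA' A Q) : Prop :=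
  (∀ q : Q, ∃ α, q ∈ M.evalFrom {M.init} α) ∧
  (∀ q : Q, ∃ α, ∃ q' ∈ M.evalFrom {q} α, M.accept q')

/-- `r` is a Wheeler order for the NFA `M`. -/
def IsWheelerNFAOrder {A Q : Type} [LinearOrder A] (M : NFA' A Q) (r : Q → Q → Prop) : Prop :=
  IsStrictTotalOrder Q r ∧
  (∀ q : Q, q ≠ M.init → r M.init q) ∧
  (∀ (q : Q) (a : A), M.init ∉ M.trans q a) ∧
  (∀ (u₁ : Q) (a₁ : A) (v₁ : Q) (u₂ : Q) (a₂ : A) (v₂ : Q),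
     v₁ ∈ M.trans u₁ a₁ → v₂ ∈ M.trans u₂ a₂ →
     (a₁ < a₂ → r v₁ v₂) ∧ (a₁ = a₂ → r u₁ u₂ → (r v₁ v₂ ∨ v₁ = v₂)))

/-- `I` is an interval with respect to the strict order `r`. -/
def IsIntervalRel {Q : Type} (r : Q → Q → Prop) (I : Set Q) : Prop :=
  ∀ x y z : Q, (r x y ∨ x = y) → (r y z ∨ y = z) → x ∈ I → z ∈ I → y ∈ I

/-- The class of star-free languages: built from `∅`, `{ε}` and the singletons
`{a}` by union, concatenation and complement. -/
inductive StarFree {A : Type} : Set (List A) → Prop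
  | empty : StarFree ∅
  | eps : StarFree {[]}
  | single (a : A) : StarFree {[a]}
  | union {L₁ L₂ : Set (List A)} : StarFree L₁ → StarFree L₂ → StarFree (L₁ ∪ L₂)
  | concat {L₁ L₂ : Set (List A)} : StarFree L₁ → StarFree L₂ →
      StarFree {w | ∃ u v, u ∈ L₁ ∧ v ∈ L₂ ∧ w = u ++ v}
  | compl {L : Set (List A)} : StarFree L → StarFree Lᶜ


/-- The language of all words over the sub-alphabet `S`. -/
def wordsOver {A : Type} (S : Set A) : Language A := {w | ∀ x ∈ w, x ∈ S}


/-!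
In a Wheeler automaton, the state reached is a monotone function of the word read, from the
co-lexicographic order to the state order, and it determines the right context. A monotone map into
a finite order turns monotone sequences into eventually constant ones.

Conversely, label each prefix of `L` by its right context and last letter, and glue two prefixes
when the label is constant on the whole co-lexicographic interval between them. If there were
infinitely many classes, they would contain a strictly monotone sequence; since the label changes
somewhere between consecutive classes, this sequence could be refined to a monotone sequence along
which the label never stabilizes. The classes are convex and compatible with appending a letter, so
they are the states of a Wheeler automaton.
-/

open Filter

section EventuallyConst

theorem eventuallyConst_atTop_iff_forall_forall {ι X : Type*} [SemilatticeSup ι] [Nonempty ι]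
    {u : ι → X} :
    EventuallyConst u atTop ↔ ∃ n, ∀ h k, n ≤ h → n ≤ k → u h = u k := by
  rw [eventuallyConst_atTop]
  exact exists_congr fun n => ⟨fun hn h k hh hk => (hn h hh).trans (hn k hk).symm,
    fun hn k hk => hn k n hk le_rfl⟩

theorem eventuallyConst_comp_of_finite {P Q : Type*} [Preorder P] [PartialOrder Q] [Finite Q]
    {g : P → Q} (hg : Monotone g) {s : ℕ → P} (hs : Monotone s ∨ Antitone s) :
    EventuallyConst (g ∘ s) atTop := by
  have hchain : ∃ n, ∀ m, n ≤ m → (g ∘ s) n = (g ∘ s) m := hs.elim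
    (fun hs => WellFoundedGT.monotone_chain_condition ⟨g ∘ s, hg.comp hs⟩)
    (fun hs => WellFoundedLT.antitone_chain_condition (hg.comp_antitone hs))
  obtain ⟨n, hn⟩ := hchain
  exact eventuallyConst_atTop.2 ⟨n, fun m hm => (hn m hm).symm⟩

end EventuallyConst

section ConvexKernel

variable {P X : Type*} [LinearOrder P]

/-- The coarsest equivalence relation with convex classes on which `f` is constant: two points are
related when `f` is constant on the closed interval between them. -/
def convexKer (f : P → X) : Setoid P where
  r x y := ∀ z ∈ Set.uIcc x y, f z = f x
  iseqv :=
    { refl x z hz := by rw [Set.uIcc_self] at hz; rw [hz]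
      symm {x y} h z hz :=
        (h z (Set.uIcc_comm x y ▸ hz)).trans (h y Set.right_mem_uIcc).symm
      trans {x y z} hxy hyz w hw :=
        (Set.uIcc_subset_uIcc_union_uIcc hw).elim (hxy w) fun hw =>
          (hyz w hw).trans (hxy y Set.right_mem_uIcc) }

variable {f : P → X}

theorem convexKer_apply {x y : P} : convexKer f x y ↔ ∀ z ∈ Set.uIcc x y, f z = f x :=
  Iff.rfl

theorem eq_of_convexKer {x y : P} (h : convexKer f x y) : f x = f y :=
  (h y Set.right_mem_uIcc).symm

instance ordConnected_convexKer (q : Quotient (convexKer f)) :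
    (Quotient.mk (convexKer f) ⁻¹' {q}).OrdConnected where
  out' := by
    rintro x rfl y hy z hz
    have hxy : convexKer f x y := Quotient.exact hy.symm
    refine Quotient.sound ((convexKer f).symm fun w hw => hxy w ?_)
    exact Set.uIcc_subset_uIcc_left (Set.Icc_subset_uIcc hz) hw

theorem exists_monotone_forall_succ_ne {s : ℕ → P} (hs : Monotone s)
    (hne : ∀ n, ¬ convexKer f (s n) (s (n + 1))) :
    ∃ u : ℕ → P, Monotone u ∧ ∀ n, f (u (n + 1)) ≠ f (u n) := by
  -- The two values of `f` seen in `[s n, s (n + 1)]` cannot both agree with the current value.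
  have hstep : ∀ n x, ∃ y, x ≤ s n → x ≤ y ∧ y ≤ s (n + 1) ∧ f y ≠ f x := by
    intro n x
    obtain ⟨z, hz, hfz⟩ : ∃ z ∈ Set.Icc (s n) (s (n + 1)), f z ≠ f (s n) := by
      simpa [convexKer_apply, Set.uIcc_of_le (hs n.le_succ), and_assoc] using hne n
    by_cases hx : f (s n) = f x
    · exact ⟨z, fun h => ⟨h.trans hz.1, hz.2, hx ▸ hfz⟩⟩
    · exact ⟨s n, fun h => ⟨h, hs n.le_succ, hx⟩⟩
  choose next hnext using hstep
  let u : ℕ → P := fun n => Nat.rec (s 0) next n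
  have hu : ∀ n, u n ≤ s n := by
    intro n
    induction n with
    | zero => exact le_rfl
    | succ n ih => exact (hnext n _ ih).2.1
  exact ⟨u, monotone_nat_of_le_succ fun n => (hnext n _ (hu n)).1,
    fun n => (hnext n _ (hu n)).2.2⟩

theorem exists_antitone_forall_succ_ne {s : ℕ → P} (hs : Antitone s)
    (hne : ∀ n, ¬ convexKer f (s n) (s (n + 1))) :
    ∃ u : ℕ → P, Antitone u ∧ ∀ n, f (u (n + 1)) ≠ f (u n) := by
  refine exists_monotone_forall_succ_ne (P := Pᵒᵈ) (f := f ∘ OrderDual.ofDual)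
    (s := OrderDual.toDual ∘ s) hs.dual_right fun n h => hne n fun z hz => ?_
  exact h (OrderDual.toDual z) (by simpa [Set.uIcc_toDual] using hz)

theorem finite_quotient_convexKer
    (H : ∀ u : ℕ → P, Monotone u ∨ Antitone u → EventuallyConst (f ∘ u) atTop) :
    Finite (Quotient (convexKer f)) := by
  classical
  have hnot : ¬ ∃ u : ℕ → P, (Monotone u ∨ Antitone u) ∧ ∀ n, f (u (n + 1)) ≠ f (u n) := by
    rintro ⟨u, hu, hne⟩
    obtain ⟨n, hn⟩ := eventuallyConst_atTop_nat.1 (H u hu)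
    exact hne n (hn n le_rfl)
  have hlt : ∀ p q : Quotient (convexKer f), p < q → p.out < q.out := fun p q h =>
    Quotient.lt_of_mk_lt_mk (s := convexKer f) (by simpa only [Quotient.out_eq] using h)
  refine Finite.of_not_infinite fun _ => hnot ?_
  obtain ⟨q, hq⟩ := Infinite.exists_strictMono_or_strictAnti (Quotient (convexKer f))
  have hne : ∀ n, ¬ convexKer f (q n).out (q (n + 1)).out := fun n h =>
    (hq.elim StrictMono.injective StrictAnti.injective).ne n.succ_ne_self.symm
      (Quotient.out_equiv_out.1 h)
  rcases hq with hq | hq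
  · have hs : StrictMono fun n => (q n).out := fun _ _ h => hlt _ _ (hq h)
    obtain ⟨u, hu, hfu⟩ := exists_monotone_forall_succ_ne hs.monotone hne
    exact ⟨u, .inl hu, hfu⟩
  · have hs : StrictAnti fun n => (q n).out := fun _ _ h => hlt _ _ (hq h)
    obtain ⟨u, hu, hfu⟩ := exists_antitone_forall_succ_ne hs.antitone hne
    exact ⟨u, .inr hu, hfu⟩

end ConvexKernel

section Languages

variable {A : Type} {L : Set (List A)} {x y : List A}

theorem rc_append_eq (h : rc L x = rc L y) (z : List A) : rc L (x ++ z) = rc L (y ++ z) := by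
  ext γ
  simpa only [rc, Set.mem_ofPred_eq, List.append_assoc] using Set.ext_iff.1 h (z ++ γ)

theorem mem_iff_of_rc_eq (h : rc L x = rc L y) : x ∈ L ↔ y ∈ L := by
  simpa only [rc, Set.mem_ofPred_eq, List.append_nil] using Set.ext_iff.1 h []

theorem mem_pref_iff_of_rc_eq (h : rc L x = rc L y) : x ∈ Pref L ↔ y ∈ Pref L :=
  show (rc L x).Nonempty ↔ (rc L y).Nonempty by rw [h]

theorem mem_pref_of_mem (h : x ∈ L) : x ∈ Pref L :=
  ⟨[], by rwa [List.append_nil]⟩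

theorem mem_pref_of_append (h : x ++ y ∈ Pref L) : x ∈ Pref L := by
  obtain ⟨z, hz⟩ := h
  exact ⟨y ++ z, by rwa [← List.append_assoc]⟩

end Languages

section ColexOrder

variable {A : Type} [LinearOrder A] {x y : List A} {a b : A}

theorem colexLE_iff_reverse_le : ColexLE x y ↔ x.reverse ≤ y.reverse := by
  rw [le_iff_lt_or_eq, List.reverse_inj]
  exact Iff.rfl

theorem colexLE_append_singleton :
    ColexLE (x ++ [a]) (y ++ [b]) ↔ a < b ∨ a = b ∧ ColexLE x y := by
  simp only [colexLE_iff_reverse_le, List.reverse_append, List.reverse_singleton,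
    List.singleton_append, le_iff_lt_or_eq, List.cons_lt_cons_iff, List.cons.injEq]
  tauto

theorem nil_colexLE : ColexLE [] x := by
  rw [colexLE_iff_reverse_le]
  exact not_lt.1 (List.not_lt_nil x.reverse)

theorem not_append_singleton_colexLE_nil : ¬ ColexLE (x ++ [a]) [] := by
  simp [colexLE_iff_reverse_le]

end ColexOrder

namespace PDFA

variable {A Q Q' : Type}

theorem evalFrom_append (M : PDFA A Q) (q : Q) (x y : List A) :
    M.evalFrom q (x ++ y) = (M.evalFrom q x).bind fun p => M.evalFrom p y := by
  induction x generalizing q with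
  | nil => rfl
  | cons a x ih =>
    simp only [List.cons_append, evalFrom, ih, Option.bind_assoc]

theorem evalFrom_append_singleton_eq_some {M : PDFA A Q} {p q : Q} {x : List A} {a : A} :
    M.evalFrom p (x ++ [a]) = some q ↔ ∃ p', M.evalFrom p x = some p' ∧ M.trans p' a = some q := by
  simp [evalFrom_append, evalFrom, Option.bind_eq_some_iff]

theorem exists_evalFrom_eq_some_of_mem_pref {M : PDFA A Q} {x : List A}
    (hx : x ∈ Pref M.accepts) : ∃ q, M.evalFrom M.init x = some q := by
  obtain ⟨y, q, hq, -⟩ := hx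
  rw [evalFrom_append, Option.bind_eq_some_iff] at hq
  exact hq.imp fun _ h => h.1

theorem rc_accepts {M : PDFA A Q} {x : List A} {q : Q} (h : M.evalFrom M.init x = some q) :
    rc M.accepts x = {γ | ∃ p, M.evalFrom q γ = some p ∧ M.accept p} := by
  simp only [rc, accepts, Set.mem_ofPred_eq, evalFrom_append, h, Option.bind_some]

/-- Renaming of the states of an automaton along a bijection. -/
def reindex (M : PDFA A Q) (e : Q ≃ Q') : PDFA A Q' where
  init := e M.init
  trans q a := (M.trans (e.symm q) a).map e
  accept q := M.accept (e.symm q)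

theorem evalFrom_reindex (M : PDFA A Q) (e : Q ≃ Q') (q : Q) (x : List A) :
    (M.reindex e).evalFrom (e q) x = (M.evalFrom q x).map e := by
  induction x generalizing q with
  | nil => rfl
  | cons a x ih =>
    simp only [evalFrom, reindex, Equiv.symm_apply_apply, Option.bind_map, Option.map_bind]
    exact congrArg _ (funext ih)

theorem accepts_reindex (M : PDFA A Q) (e : Q ≃ Q') : (M.reindex e).accepts = M.accepts := by
  ext x
  have heval := M.evalFrom_reindex e M.init x
  simp only [accepts, Set.mem_ofPred_eq, show (M.reindex e).init = e M.init from rfl, heval,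
    Option.map_eq_some_iff]
  simp [reindex]

end PDFA

section WheelerAutomata

variable {A Q Q' : Type} [LinearOrder A] {M : PDFA A Q} {r : Q → Q → Prop}

theorem IsWheelerOrder.reindex (h : IsWheelerOrder M r) (e : Q ≃ Q') :
    IsWheelerOrder (M.reindex e) fun p q => r (e.symm p) (e.symm q) := by
  obtain ⟨hstrict, hmin, hinit, htrans⟩ := h
  refine ⟨(RelEmbedding.preimage e.symm.toEmbedding r).isStrictTotalOrder, ?_, ?_, ?_⟩
  · intro q hq
    have hne : e.symm q ≠ M.init := by rwa [Ne, e.symm_apply_eq]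
    simpa only [PDFA.reindex, Equiv.symm_apply_apply] using hmin _ hne
  · intro q a
    simpa [PDFA.reindex] using hinit (e.symm q) a
  · intro u₁ a₁ v₁ u₂ a₂ v₂ h₁ h₂
    obtain ⟨w₁, hw₁, rfl⟩ := Option.map_eq_some_iff.1 h₁
    obtain ⟨w₂, hw₂, rfl⟩ := Option.map_eq_some_iff.1 h₂
    simpa only [Equiv.symm_apply_apply, e.injective.eq_iff] using htrans _ _ _ _ _ _ hw₁ hw₂

theorem IsWheelerOrder.isWheelerLang [Finite Q] (h : IsWheelerOrder M r) :
    IsWheelerLang M.accepts := by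
  obtain ⟨n, ⟨e⟩⟩ := Finite.exists_equiv_fin Q
  exact ⟨n, M.reindex e, _, h.reindex e, M.accepts_reindex e⟩

theorem isWheelerLang_empty : IsWheelerLang (∅ : Set (List A)) :=
  ⟨1, ⟨0, fun _ _ => none, fun _ => False⟩, (· < ·),
    ⟨inferInstance, by simp [Fin.fin_one_eq_zero], by simp, by simp⟩, by simp [PDFA.accepts]⟩

theorem IsWheelerOrder.evalFrom_mono (h : IsWheelerOrder M r) {x y : List A} {p q : Q}
    (hp : M.evalFrom M.init x = some p) (hq : M.evalFrom M.init y = some q) (hxy : ColexLE x y) :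
    p = q ∨ r p q := by
  obtain ⟨-, hmin, -, htrans⟩ := h
  induction x using List.reverseRecOn generalizing y p q with
  | nil =>
    obtain rfl : M.init = p := Option.some.inj hp
    exact (eq_or_ne q M.init).imp Eq.symm (hmin q)
  | append_singleton x a ih =>
    induction y using List.reverseRecOn with
    | nil => exact absurd hxy not_append_singleton_colexLE_nil
    | append_singleton y b =>
      obtain ⟨p', hp', hpa⟩ := PDFA.evalFrom_append_singleton_eq_some.1 hp
      obtain ⟨q', hq', hqb⟩ := PDFA.evalFrom_append_singleton_eq_some.1 hq
      obtain ⟨hlt, hle⟩ := htrans p' a p q' b q hpa hqb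
      rcases colexLE_append_singleton.1 hxy with hab | ⟨rfl, hxy'⟩
      · exact Or.inr (hlt hab)
      · rcases ih hp' hq' hxy' with rfl | hpq
        · exact Or.inl (Option.some.inj (hpa.symm.trans hqb))
        · exact (hle rfl hpq).symm

end WheelerAutomata

/-- A prefix of a word of `L`. This is a structure rather than the subtype `↥(Pref L)` because it
is ordered co-lexicographically, whereas the subtype inherits the lexicographic order of lists. -/
@[ext]
structure PrefWord {A : Type} (L : Set (List A)) where
  word : List A
  mem_pref : word ∈ Pref L

namespace PrefWord

variable {A : Type} {L : Set (List A)}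

theorem exists_eq_append_of_word_eq {z : PrefWord L} {w v : List A} (h : z.word = w ++ v) :
    ∃ x : PrefWord L, z.word = x.word ++ v :=
  ⟨⟨w, mem_pref_of_append (h ▸ z.mem_pref)⟩, h⟩

/-- The last letter of a prefix, with `⊥` for the empty word so that it depends monotonically on
the prefix. -/
def lastLetter (x : PrefWord L) : WithBot A :=
  x.word.getLast?

theorem lastLetter_eq_bot {x : PrefWord L} (h : x.word = []) : x.lastLetter = ⊥ := by
  rw [lastLetter, h]
  rfl

theorem lastLetter_eq_coe {x : PrefWord L} {a : A} :
    x.lastLetter = a ↔ ∃ w, x.word = w ++ [a] :=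
  List.getLast?_eq_some_iff

variable [LinearOrder A]

instance : LinearOrder (PrefWord L) :=
  LinearOrder.lift' (fun x => x.word.reverse) fun _ _ h => PrefWord.ext (List.reverse_injective h)

theorem colexLE_iff_le {x y : PrefWord L} : ColexLE x.word y.word ↔ x ≤ y :=
  colexLE_iff_reverse_le

theorem append_singleton_le_append_singleton {x y x' y' : PrefWord L} {a b : A}
    (hx : x'.word = x.word ++ [a]) (hy : y'.word = y.word ++ [b]) :
    x' ≤ y' ↔ a < b ∨ a = b ∧ x ≤ y := by
  rw [← colexLE_iff_le, hx, hy, colexLE_append_singleton, colexLE_iff_le]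

theorem monotone_lastLetter : Monotone (lastLetter (L := L)) := by
  intro x y hxy
  rcases List.eq_nil_or_concat' x.word with hx | ⟨v, a, hx⟩
  · rw [lastLetter_eq_bot hx]
    exact bot_le
  rw [← colexLE_iff_le, hx] at hxy
  rcases List.eq_nil_or_concat' y.word with hy | ⟨w, b, hy⟩
  · exact absurd (hy ▸ hxy) not_append_singleton_colexLE_nil
  · rw [hy, colexLE_append_singleton] at hxy
    rw [lastLetter_eq_coe.2 ⟨v, hx⟩, lastLetter_eq_coe.2 ⟨w, hy⟩, WithBot.coe_le_coe]
    exact hxy.elim le_of_lt fun h => h.1.le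

/-- The data that must agree on a whole co-lexicographic interval of prefixes for them to be
merged: `convexKer label` is the relation `≡^c_L` of `EquivC`, restricted to `Pref L`. -/
def label (x : PrefWord L) : Set (List A) × WithBot A :=
  (rc L x.word, x.lastLetter)

theorem rc_eq_of_convexKer {x y : PrefWord L} (h : convexKer label x y) :
    rc L x.word = rc L y.word :=
  congrArg Prod.fst (eq_of_convexKer h)

theorem lastLetter_eq_of_convexKer {x y : PrefWord L} (h : convexKer label x y) :
    x.lastLetter = y.lastLetter :=
  congrArg Prod.snd (eq_of_convexKer h)

theorem exists_mem_uIcc_of_append_singleton {x y x' y' z' : PrefWord L} {a : A}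
    (hx : x'.word = x.word ++ [a]) (hy : y'.word = y.word ++ [a]) (hz' : z' ∈ Set.uIcc x' y') :
    ∃ z ∈ Set.uIcc x y, z'.word = z.word ++ [a] := by
  have hlast : z'.lastLetter = a := by
    have hmem := monotone_lastLetter.mapsTo_uIcc hz'
    rwa [lastLetter_eq_coe.2 ⟨_, hx⟩, lastLetter_eq_coe.2 ⟨_, hy⟩, Set.uIcc_self] at hmem
  obtain ⟨w, hw⟩ := lastLetter_eq_coe.1 hlast
  obtain ⟨z, hz⟩ := exists_eq_append_of_word_eq hw
  refine ⟨z, ?_, hz⟩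
  simpa only [Set.mem_uIcc, append_singleton_le_append_singleton hx hz,
    append_singleton_le_append_singleton hy hz, append_singleton_le_append_singleton hz hx,
    append_singleton_le_append_singleton hz hy, lt_irrefl, true_and, false_or] using hz'

theorem convexKer_append_singleton {x y x' y' : PrefWord L} {a : A} (h : convexKer label x y)
    (hx : x'.word = x.word ++ [a]) (hy : y'.word = y.word ++ [a]) :
    convexKer label x' y' := by
  intro z' hz'
  obtain ⟨z, hz, hzz'⟩ := exists_mem_uIcc_of_append_singleton hx hy hz'
  have hrc : rc L z.word = rc L x.word := congrArg Prod.fst (h z hz)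
  refine Prod.ext ?_ ?_
  · simpa only [label, hzz', hx] using rc_append_eq hrc [a]
  · exact (lastLetter_eq_coe.2 ⟨_, hzz'⟩).trans (lastLetter_eq_coe.2 ⟨_, hx⟩).symm

theorem eventuallyConst_label [Finite A] {α : ℕ → PrefWord L} (hα : Monotone α ∨ Antitone α)
    (hrc : EventuallyConst (fun i => rc L (α i).word) atTop) :
    EventuallyConst (label ∘ α) atTop :=
  have : Finite (WithBot A) := inferInstanceAs (Finite (Option A))
  EventuallyConst.prodMk (g := lastLetter ∘ α) hrc
    (eventuallyConst_comp_of_finite monotone_lastLetter hα)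

end PrefWord

section CanonicalAutomaton

variable {A : Type} [LinearOrder A] {L : Set (List A)}

open PrefWord

open Classical in
/-- The automaton whose states are the classes of `≡^c_L` on `Pref L`, ordered by the
co-lexicographic order of their elements. Transitions and acceptance are read off a representative
of the class; `[] ∈ Pref L` says that `L` is nonempty and provides the initial state. -/
noncomputable def convexDFA (h₀ : [] ∈ Pref L) :
    PDFA A (Quotient (convexKer (label (L := L)))) where
  init := Quotient.mk _ ⟨[], h₀⟩
  trans q a :=
    if h : q.out.word ++ [a] ∈ Pref L then some (Quotient.mk _ ⟨q.out.word ++ [a], h⟩) else none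
  accept q := q.out.word ∈ L

variable {h₀ : [] ∈ Pref L}

theorem convexDFA_trans_eq_some {q v : Quotient (convexKer (label (L := L)))} {a : A} :
    (convexDFA h₀).trans q a = some v ↔
      ∃ x x' : PrefWord L, Quotient.mk _ x = q ∧ Quotient.mk _ x' = v ∧
        x'.word = x.word ++ [a] := by
  simp only [convexDFA, Option.dite_none_right_eq_some, Option.some.injEq]
  constructor
  · rintro ⟨h, rfl⟩
    exact ⟨q.out, _, q.out_eq, rfl, rfl⟩
  · rintro ⟨x, x', rfl, rfl, hx'⟩
    have hout : convexKer label (Quotient.mk (convexKer label) x).out x := Quotient.mk_out x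
    have hrc := rc_append_eq (rc_eq_of_convexKer hout) [a]
    exact ⟨(mem_pref_iff_of_rc_eq hrc).2 (hx' ▸ x'.mem_pref),
      Quotient.sound (convexKer_append_singleton hout rfl hx')⟩

theorem convexDFA_evalFrom_eq_some {w : List A} {q : Quotient (convexKer (label (L := L)))} :
    (convexDFA h₀).evalFrom (convexDFA h₀).init w = some q ↔
      ∃ x : PrefWord L, x.word = w ∧ Quotient.mk _ x = q := by
  induction w using List.reverseRecOn generalizing q with
  | nil =>
    refine Option.some_inj.trans ⟨fun h => ⟨⟨[], h₀⟩, rfl, h⟩, ?_⟩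
    rintro ⟨x, hx, rfl⟩
    exact congrArg _ (PrefWord.ext hx.symm)
  | append_singleton w a ih =>
    simp only [PDFA.evalFrom_append_singleton_eq_some, ih, convexDFA_trans_eq_some]
    constructor
    · rintro ⟨_, ⟨x, rfl, rfl⟩, y, y', hyx, rfl, hy'⟩
      have hrc := rc_append_eq (rc_eq_of_convexKer (Quotient.exact hyx)) [a]
      have hmem := (mem_pref_iff_of_rc_eq hrc).1 (hy' ▸ y'.mem_pref)
      exact ⟨⟨x.word ++ [a], hmem⟩, rfl,
        (Quotient.sound (convexKer_append_singleton (Quotient.exact hyx) hy' rfl)).symm⟩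
    · rintro ⟨x', hx', rfl⟩
      exact ⟨_, ⟨⟨w, mem_pref_of_append (hx' ▸ x'.mem_pref)⟩, rfl, rfl⟩, _, x', rfl, rfl, hx'⟩

theorem accepts_convexDFA : (convexDFA h₀).accepts = L := by
  have haccept (x : PrefWord L) :
      (convexDFA h₀).accept (Quotient.mk _ x) ↔ x.word ∈ L :=
    mem_iff_of_rc_eq (rc_eq_of_convexKer (Quotient.mk_out x))
  ext w
  simp only [PDFA.accepts, Set.mem_ofPred_eq, convexDFA_evalFrom_eq_some]
  constructor
  · rintro ⟨_, ⟨x, rfl, rfl⟩, hx⟩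
    exact (haccept x).1 hx
  · intro hw
    exact ⟨_, ⟨⟨w, mem_pref_of_mem hw⟩, rfl, rfl⟩, (haccept _).2 hw⟩

theorem isWheelerOrder_convexDFA : IsWheelerOrder (convexDFA h₀) (· < ·) := by
  classical
  refine ⟨inferInstance, fun q hq => ?_, fun q a h => ?_, ?_⟩
  · have hle : (convexDFA h₀).init ≤ q := by
      rw [← q.out_eq]
      exact Quotient.mk_monotone (colexLE_iff_le.1 nil_colexLE)
    exact hle.lt_of_ne hq.symm
  · obtain ⟨x, x', -, hx', hxx'⟩ := convexDFA_trans_eq_some.1 h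
    have hlast := lastLetter_eq_of_convexKer (Quotient.exact hx')
    rw [lastLetter_eq_coe.2 ⟨_, hxx'⟩, lastLetter_eq_bot rfl] at hlast
    exact WithBot.coe_ne_bot hlast
  · intro u₁ a₁ v₁ u₂ a₂ v₂ h₁ h₂
    obtain ⟨x₁, x₁', rfl, rfl, hx₁⟩ := convexDFA_trans_eq_some.1 h₁
    obtain ⟨x₂, x₂', rfl, rfl, hx₂⟩ := convexDFA_trans_eq_some.1 h₂
    have hle := append_singleton_le_append_singleton hx₁ hx₂
    constructor
    · intro ha
      refine (Quotient.mk_monotone (hle.2 (Or.inl ha))).lt_of_ne fun heq => ha.ne ?_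
      have hlast := lastLetter_eq_of_convexKer (Quotient.exact heq)
      rwa [lastLetter_eq_coe.2 ⟨_, hx₁⟩, lastLetter_eq_coe.2 ⟨_, hx₂⟩, WithBot.coe_inj] at hlast
    · intro ha hlt
      exact (Quotient.mk_monotone (hle.2 (Or.inr ⟨ha, (Quotient.lt_of_mk_lt_mk hlt).le⟩))).lt_or_eq

end CanonicalAutomaton

section Characterization

variable {A : Type} [LinearOrder A] {L : Set (List A)}

theorem IsWheelerLang.eventuallyConst_rc (hL : IsWheelerLang L) {α : ℕ → PrefWord L}
    (hα : Monotone α ∨ Antitone α) : EventuallyConst (fun i => rc L (α i).word) atTop := by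
  obtain ⟨n, M, r, hr, rfl⟩ := hL
  have := hr.1
  let : PartialOrder (Fin n) := partialOrderOfSO r
  choose state hstate using fun x : PrefWord M.accepts =>
    PDFA.exists_evalFrom_eq_some_of_mem_pref x.mem_pref
  have hmono : Monotone state := fun x y hxy =>
    hr.evalFrom_mono (hstate x) (hstate y) (PrefWord.colexLE_iff_le.2 hxy)
  simp only [PDFA.rc_accepts (hstate _)]
  exact (eventuallyConst_comp_of_finite hmono hα).comp
    fun q => {γ | ∃ p, M.evalFrom q γ = some p ∧ M.accept p}

theorem isWheelerLang_of_eventuallyConst_rc [Finite A]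
    (H : ∀ α : ℕ → PrefWord L, Monotone α ∨ Antitone α →
      EventuallyConst (fun i => rc L (α i).word) atTop) : IsWheelerLang L := by
  rcases L.eq_empty_or_nonempty with rfl | ⟨w, hw⟩
  · exact isWheelerLang_empty
  have h₀ : [] ∈ Pref L := ⟨w, hw⟩
  have : Finite (Quotient (convexKer (PrefWord.label (L := L)))) :=
    finite_quotient_convexKer fun α hα => PrefWord.eventuallyConst_label hα (H α hα)
  rw [← accepts_convexDFA (h₀ := h₀)]
  exact isWheelerOrder_convexDFA.isWheelerLang

theorem statement2_general [Finite A] (L : Set (List A)) :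
    IsWheelerLang L ↔
      ∀ α : ℕ → List A, (∀ i, α i ∈ Pref L) →
        ((∀ i, ColexLE (α i) (α (i + 1))) ∨ (∀ i, ColexLE (α (i + 1)) (α i))) →
        ∃ n : ℕ, ∀ h k : ℕ, n ≤ h → n ≤ k → rc L (α h) = rc L (α k) := by
  refine ⟨fun hL α hα hmono => ?_, fun H => isWheelerLang_of_eventuallyConst_rc fun α hα => ?_⟩
  · let β : ℕ → PrefWord L := fun i => ⟨α i, hα i⟩
    have hβ : Monotone β ∨ Antitone β := hmono.imp
      (fun h => monotone_nat_of_le_succ fun i => PrefWord.colexLE_iff_le.1 (h i))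
      (fun h => antitone_nat_of_succ_le fun i => PrefWord.colexLE_iff_le.1 (h i))
    exact eventuallyConst_atTop_iff_forall_forall.1 (hL.eventuallyConst_rc hβ)
  · refine eventuallyConst_atTop_iff_forall_forall.2
      (H (fun i => (α i).word) (fun i => (α i).mem_pref) ?_)
    exact hα.imp (fun h i => PrefWord.colexLE_iff_le.2 (h i.le_succ))
      (fun h i => PrefWord.colexLE_iff_le.2 (h i.le_succ))

end Characterization

section Statement2

/-- Lemma 1 of the paper: a regular language is Wheeler iff
every co-lexicographically monotone sequence of prefixes is eventually constant
modulo the Myhill–Nerode equivalence. -/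
theorem statement2 {A : Type} [Fintype A] [LinearOrder A]
    (L : Set (List A)) (hreg : IsRegular L) :
    IsWheelerLang L ↔
      ∀ α : ℕ → List A, (∀ i, α i ∈ Pref L) →
        ((∀ i, ColexLE (α i) (α (i + 1))) ∨ (∀ i, ColexLE (α (i + 1)) (α i))) →
        ∃ n : ℕ, ∀ h k : ℕ, n ≤ h → n ≤ k → rc L (α h) = rc L (α k) :=
  statement2_general L

end Statement2

end WheelerPaper
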